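/- arXiv:2410.10170 — 4 statements merged into one kernel-verified Lean document; each statement's English description precedes it below -/
import Mathlib

section
/- If a connected graph G satisfies γ_t(G) = i_0(G) + 1, then the diameter of G is at most 2. -/
variable {V : Type*} [Fintype V] [DecidableEq V]

/-- `S` is a total dominating set of `G`: every vertex of `G` has a neighbor in `S`. -/
def IsTotalDomSet (G : SimpleGraph V) (S : Finset V) : Prop :=
  ∀ v : V, ∃ u ∈ S, G.Adj u v

/-- The total domination number: minimum cardinality of a total dominating set. -/
noncomputable def totalDomNum (G : SimpleGraph V) : ℕ :=
  sInf {n | ∃ S : Finset V, IsTotalDomSet G S ∧ S.card = n}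

/-- `S` is an isolate set of `G`: some vertex of `S` has no neighbor in `S`. -/
def IsIsolateSet (G : SimpleGraph V) (S : Finset V) : Prop :=
  ∃ v ∈ S, ∀ u ∈ S, ¬ G.Adj v u

/-- `S` is a maximal isolate set of `G`. -/
def IsMaximalIsolateSet (G : SimpleGraph V) (S : Finset V) : Prop :=
  IsIsolateSet G S ∧ ∀ T : Finset V, S ⊂ T → ¬ IsIsolateSet G T

/-- The isolate number: minimum cardinality of a maximal isolate set. -/
noncomputable def isolateNum (G : SimpleGraph V) : ℕ :=
  sInf {n | ∃ S : Finset V, IsMaximalIsolateSet G S ∧ S.card = n}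

/-!
Let `v` be an isolated vertex of a minimum maximal isolate set `S`. By maximality `S` consists of
exactly the non-neighbors of `v`, and adding any neighbor `u` of `v` to `S` gives a total dominating
set, which is minimum when `γ_t(G) = i_0(G) + 1`. Then each element of `S ∪ {u}` has a private
neighbor. The private neighbors of the elements of `S \ {v}` are distinct and adjacent to neither
`v` nor `u`, so they exhaust `S \ {v}`, and `v` is the only neighbor of `u` in `S`. Hence no edge
leaves the closed neighborhood of `v`, so by connectedness `v` is adjacent to every other vertex.
-/

section

variable {α : Type*} {G : SimpleGraph α} {S T : Finset α} {u v x y z : α}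

theorem ediam_le_two_of_isUniversal (hv : G.IsUniversal v) : G.ediam ≤ 2 :=
  calc
    G.ediam ≤ 2 * G.eccent v := G.ediam_le_two_mul_eccent v
    _ ≤ 2 * 1 := by gcongr; exact (G.eccent_le_one_iff v).2 fun _ hvw ↦ hv hvw
    _ = 2 := mul_one 2

/-- `z` is an (open) private neighbor of `x` with respect to `T`: it is adjacent to `x` and to no
other element of `T`. Such a `z`, which may itself lie in `T`, is what prevents `x` from being
removed from a total dominating set `T`. -/
def IsPrivateNeighbor (G : SimpleGraph α) (T : Finset α) (x z : α) : Prop :=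
  G.Adj x z ∧ ∀ y ∈ T, G.Adj y z → y = x

theorem IsPrivateNeighbor.not_adj (hz : IsPrivateNeighbor G T x z) (hy : y ∈ T) (hyx : y ≠ x) :
    ¬ G.Adj y z :=
  fun hyz ↦ hyx (hz.2 y hy hyz)

theorem totalDomNum_le_card (hT : IsTotalDomSet G T) : totalDomNum G ≤ T.card :=
  Nat.sInf_le ⟨T, hT, rfl⟩

theorem totalDomNum_ne_one (G : SimpleGraph α) : totalDomNum G ≠ 1 := by
  intro h
  obtain ⟨T, hT, hcard⟩ : ∃ T, IsTotalDomSet G T ∧ T.card = totalDomNum G :=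
    Nat.sInf_mem (Nat.nonempty_of_sInf_eq_succ h)
  obtain ⟨a, rfl⟩ := Finset.card_eq_one.1 (hcard.trans h)
  obtain ⟨b, hb, hba⟩ := hT a
  exact hba.ne (Finset.mem_singleton.1 hb)

theorem IsTotalDomSet.minimal_of_card_le_totalDomNum (hT : IsTotalDomSet G T)
    (hcard : T.card ≤ totalDomNum G) : Minimal (IsTotalDomSet G) T :=
  ⟨hT, fun _ hU hUT ↦
    (Finset.eq_of_subset_of_card_le hUT (hcard.trans (totalDomNum_le_card hU))).ge⟩

theorem exists_isPrivateNeighbor_of_minimal (hT : Minimal (IsTotalDomSet G) T) (hx : x ∈ T) :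
    ∃ z, IsPrivateNeighbor G T x z := by
  classical
  have herase : ¬ IsTotalDomSet G (T.erase x) :=
    hT.not_prop_of_lt (Finset.erase_ssubset hx)
  simp only [IsTotalDomSet, not_forall, not_exists, not_and] at herase
  obtain ⟨z, hz⟩ := herase
  have honly : ∀ y ∈ T, G.Adj y z → y = x := fun y hy hyz ↦
    by_contra fun hyx ↦ hz y (Finset.mem_erase.2 ⟨hyx, hy⟩) hyz
  obtain ⟨y, hy, hyz⟩ := hT.prop z
  exact ⟨z, honly y hy hyz ▸ hyz, honly⟩

theorem exists_isMaximalIsolateSet_card_eq_isolateNum (h : isolateNum G ≠ 0) :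
    ∃ S, IsMaximalIsolateSet G S ∧ S.card = isolateNum G :=
  Nat.sInf_mem (Nat.nonempty_of_pos_sInf (Nat.pos_of_ne_zero h))

theorem IsMaximalIsolateSet.not_isIsolateSet_insert [DecidableEq α] (hS : IsMaximalIsolateSet G S)
    (hu : u ∉ S) : ¬ IsIsolateSet G (insert u S) :=
  hS.2 _ (Finset.ssubset_insert hu)

theorem IsMaximalIsolateSet.exists_forall_mem_iff_not_adj (hS : IsMaximalIsolateSet G S) :
    ∃ v, ∀ x, x ∈ S ↔ ¬ G.Adj v x := by
  classical
  obtain ⟨v, hvS, hv⟩ := hS.1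
  refine ⟨v, fun x ↦ ⟨hv x, fun hvx ↦ by_contra fun hxS ↦ ?_⟩⟩
  exact hS.not_isIsolateSet_insert hxS
    ⟨v, Finset.mem_insert_of_mem hvS, Finset.forall_mem_insert _ _ _ |>.2 ⟨hvx, hv⟩⟩

theorem IsMaximalIsolateSet.isTotalDomSet_insert [DecidableEq α] (hS : IsMaximalIsolateSet G S)
    (hu : u ∉ S) : IsTotalDomSet G (insert u S) := by
  obtain ⟨v, hv⟩ := hS.exists_forall_mem_iff_not_adj
  have hvS : v ∈ S := (hv v).2 G.irrefl
  intro w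
  by_cases hw : w ∈ S
  · by_contra! hnot
    exact hS.not_isIsolateSet_insert hu
      ⟨w, Finset.mem_insert_of_mem hw, fun x hx hwx ↦ hnot x hx hwx.symm⟩
  · exact ⟨v, Finset.mem_insert_of_mem hvS, not_not.1 (mt (hv w).2 hw)⟩

theorem eq_of_adj_of_minimal_isTotalDomSet_insert [DecidableEq α]
    (hv : ∀ x, x ∈ S ↔ ¬ G.Adj v x) (hvu : G.Adj v u)
    (hT : Minimal (IsTotalDomSet G) (insert u S)) (hy : y ∈ S) (huy : G.Adj u y) : y = v := by
  classical
  have hvS : v ∈ S := (hv v).2 G.irrefl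
  have huS : u ∉ S := fun hu ↦ (hv u).1 hu hvu
  choose! f hf using fun x (hx : x ∈ insert u S) ↦ exists_isPrivateNeighbor_of_minimal hT hx
  have hmaps : ∀ x ∈ S.erase v, f x ∈ S.filter (¬ G.Adj u ·) := by
    intro x hx
    obtain ⟨hxv, hxS⟩ := Finset.mem_erase.1 hx
    have hfx := hf x (Finset.mem_insert_of_mem hxS)
    have hvfx : ¬ G.Adj v (f x) := hfx.not_adj (Finset.mem_insert_of_mem hvS) hxv.symm
    have hufx : ¬ G.Adj u (f x) :=
      hfx.not_adj (Finset.mem_insert_self u S) (ne_of_mem_of_not_mem hxS huS).symm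
    exact Finset.mem_filter.2 ⟨(hv _).2 hvfx, hufx⟩
  have hinj : Set.InjOn f (S.erase v) := by
    intro a ha b hb hab
    have haT := Finset.mem_insert_of_mem (b := u) (Finset.mem_of_mem_erase ha)
    have hbT := Finset.mem_insert_of_mem (b := u) (Finset.mem_of_mem_erase hb)
    exact (hf b hbT).2 a haT (hab ▸ (hf a haT).1)
  have hsub : S.filter (¬ G.Adj u ·) ⊆ S.erase v := fun z hz ↦
    Finset.mem_erase.2
      ⟨fun hzv ↦ (Finset.mem_filter.1 hz).2 (hzv ▸ hvu.symm), (Finset.mem_filter.1 hz).1⟩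
  have heq : S.filter (¬ G.Adj u ·) = S.erase v :=
    Finset.eq_of_subset_of_card_le hsub (Finset.card_le_card_of_injOn f hmaps hinj)
  by_contra hyv
  have hyfilter : y ∈ S.filter (¬ G.Adj u ·) := heq ▸ Finset.mem_erase.2 ⟨hyv, hy⟩
  exact (Finset.mem_filter.1 hyfilter).2 huy

theorem IsMaximalIsolateSet.exists_isUniversal (hS : IsMaximalIsolateSet G S)
    (hc : G.Preconnected) (hcard : S.card < totalDomNum G) : ∃ v, G.IsUniversal v := by
  classical
  obtain ⟨v, hv⟩ := hS.exists_forall_mem_iff_not_adj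
  have hnbr : ∀ u y, G.Adj v u → y ∈ S → G.Adj u y → y = v := by
    intro u y hvu
    have huS : u ∉ S := fun hu ↦ (hv u).1 hu hvu
    have hmin : Minimal (IsTotalDomSet G) (insert u S) :=
      (hS.isTotalDomSet_insert huS).minimal_of_card_le_totalDomNum <| by
        rwa [Finset.card_insert_of_notMem huS, Nat.succ_le_iff]
    exact eq_of_adj_of_minimal_isTotalDomSet_insert hv hvu hmin
  have hclosed : ∀ x, v = x ∨ G.Adj v x := by
    intro x
    induction (G.reachable_iff_reflTransGen v x).1 (hc v x) with
    | refl => exact .inl rfl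
    | @tail a b _ hab ih =>
      by_cases hb : b ∈ S
      · rcases ih with rfl | hva
        · exact .inr hab
        · exact .inl (hnbr a b hva hb hab).symm
      · exact .inr (not_not.1 (mt (hv b).2 hb))
  exact ⟨v, fun x hvx ↦ (hclosed x).resolve_left hvx⟩

theorem diam_le_two_of_totalDomNum_eq_general (hc : G.Preconnected)
    (h : totalDomNum G = isolateNum G + 1) : ∃ v, G.IsUniversal v := by
  have hpos : isolateNum G ≠ 0 := fun h0 ↦ totalDomNum_ne_one G (by rw [h, h0])
  obtain ⟨S, hS, hcard⟩ := exists_isMaximalIsolateSet_card_eq_isolateNum hpos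
  exact hS.exists_isUniversal hc (by rw [h, hcard]; exact Nat.lt_succ_self _)

end

/-- If a connected graph `G` satisfies `γ_t(G) = i_0(G) + 1`, then `diam(G) ≤ 2`. -/
theorem diam_le_two_of_totalDomNum_eq (G : SimpleGraph V) (hc : G.Connected)
    (h : totalDomNum G = isolateNum G + 1) :
    G.diam ≤ 2 := by
  obtain ⟨v, hv⟩ := diam_le_two_of_totalDomNum_eq_general hc.preconnected h
  exact ENat.toNat_le_of_le_natCast (ediam_le_two_of_isUniversal hv)
end

section
/- Let T be a tree of order n ≥ 3 with l leaves. Then γ(T) = n − l if and only if every vertex of T is either a leaf or a support vertex. -/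
open Finset

variable {V : Type*} [Fintype V] [DecidableEq V]

/-- `S` is a dominating set of `G`: every vertex outside `S` has a neighbor in `S`. -/
def IsDomSet (G : SimpleGraph V) (S : Finset V) : Prop :=
  ∀ v : V, v ∉ S → ∃ u ∈ S, G.Adj u v

/-- The domination number: minimum cardinality of a dominating set. -/
noncomputable def domNum (G : SimpleGraph V) : ℕ :=
  sInf {n | ∃ S : Finset V, IsDomSet G S ∧ S.card = n}

/-!
Leaves are pairwise non-adjacent, so the non-leaves form a dominating set of cardinality `n - l`.
A non-leaf that is not a support vertex can be removed from it, making it non-minimum. Conversely,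
if every non-leaf is a support vertex, choose a leaf next to each of them: the closed neighborhoods
of these leaves are pairwise disjoint, and every dominating set meets each of them.
-/

section Domination

variable {α ι : Type*} {G : SimpleGraph α} {S : Finset α} {s : Finset ι} {f : ι → α}

theorem IsDomSet.exists_mem_closedNeighborhood (hS : IsDomSet G S) (v : α) :
    ∃ u ∈ S, u ∈ insert v (G.neighborSet v) := by
  by_cases hv : v ∈ S
  · exact ⟨v, hv, Set.mem_insert v _⟩
  · obtain ⟨u, hu, huv⟩ := hS v hv
    exact ⟨u, hu, Set.mem_insert_of_mem v huv.symm⟩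

theorem IsDomSet.card_le_of_pairwiseDisjoint (hS : IsDomSet G S)
    (hf : (s : Set ι).PairwiseDisjoint fun i => insert (f i) (G.neighborSet (f i))) :
    #s ≤ #S := by
  choose dominator dominator_mem mem_closedNeighborhood using hS.exists_mem_closedNeighborhood
  refine card_le_card_of_injOn (dominator ∘ f) (fun i _ => dominator_mem (f i)) ?_
  intro i hi j hj hij
  have hij : dominator (f i) = dominator (f j) := hij
  exact hf.elim_set hi hj _ (mem_closedNeighborhood (f i)) (hij ▸ mem_closedNeighborhood (f j))

theorem IsDomSet.domNum_le (hS : IsDomSet G S) : domNum G ≤ #S :=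
  Nat.sInf_le ⟨S, hS, rfl⟩

variable [Finite α]

theorem exists_isDomSet_card_eq_domNum (G : SimpleGraph α) :
    ∃ S, IsDomSet G S ∧ #S = domNum G := by
  have := Fintype.ofFinite α
  have huniv : IsDomSet G univ := fun v hv => absurd (mem_univ v) hv
  exact Nat.sInf_mem (s := {n | ∃ S, IsDomSet G S ∧ #S = n}) ⟨_, univ, huniv, rfl⟩

theorem card_le_domNum_of_pairwiseDisjoint
    (hf : (s : Set ι).PairwiseDisjoint fun i => insert (f i) (G.neighborSet (f i))) :
    #s ≤ domNum G := by
  obtain ⟨S, hS, hcard⟩ := exists_isDomSet_card_eq_domNum G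
  exact hcard ▸ hS.card_le_of_pairwiseDisjoint hf

end Domination

section Leaves

variable {α : Type*} {G : SimpleGraph α} {u v w : α}

theorem neighborSet_eq_singleton_of_degree_eq_one [Fintype (G.neighborSet u)]
    (hu : G.degree u = 1) (huv : G.Adj u v) : G.neighborSet u = {v} :=
  Set.eq_singleton_iff_unique_mem.2
    ⟨huv, fun _ huw => (G.degree_eq_one_iff_existsUnique_adj.1 hu).unique huw huv⟩

theorem eq_or_eq_of_adj_of_degree_eq_one [Fintype (G.neighborSet u)] [Fintype (G.neighborSet v)]
    (hG : G.Preconnected) (huv : G.Adj u v) (hu : G.degree u = 1) (hv : G.degree v = 1) (w : α) :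
    w = u ∨ w = v := by
  by_contra hw
  obtain ⟨walk⟩ := hG u w
  obtain ⟨d, -, hfst, hsnd⟩ := walk.exists_boundary_dart {u, v} (Set.mem_insert u _) hw
  have hadj : d.snd ∈ G.neighborSet d.fst := d.adj
  rcases hfst with hfst | hfst
  · rw [hfst, neighborSet_eq_singleton_of_degree_eq_one hu huv] at hadj
    exact hsnd (Or.inr hadj)
  · rw [hfst, neighborSet_eq_singleton_of_degree_eq_one hv huv.symm] at hadj
    exact hsnd (Or.inl hadj)

theorem degree_ne_one_of_adj_of_degree_eq_one [Fintype α] [G.LocallyFinite]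
    (hG : G.Preconnected) (hcard : 3 ≤ Fintype.card α) (huv : G.Adj u v) (hu : G.degree u = 1) :
    G.degree v ≠ 1 := by
  classical
  intro hv
  have huniv : (univ : Finset α) ⊆ {u, v} := fun w _ => by
    simpa only [mem_insert, mem_singleton] using eq_or_eq_of_adj_of_degree_eq_one hG huv hu hv w
  have : Fintype.card α ≤ 2 := (card_le_card huniv).trans card_le_two
  omega

/-- A support vertex: a vertex adjacent to a leaf. -/
def IsSupportVertex (G : SimpleGraph α) [G.LocallyFinite] (v : α) : Prop :=
  ∃ u, G.Adj v u ∧ G.degree u = 1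

theorem card_le_domNum_of_forall_isSupportVertex [Finite α] [G.LocallyFinite] {s : Finset α}
    (hs : ∀ v ∈ s, G.degree v ≠ 1 ∧ IsSupportVertex G v) : #s ≤ domNum G := by
  choose! hnonleaf leaf hadj hleaf using hs
  have closedNeighborhood_leaf (v) (hv : v ∈ s) :
      insert (leaf v) (G.neighborSet (leaf v)) = {leaf v, v} := by
    rw [neighborSet_eq_singleton_of_degree_eq_one (hleaf v hv) (hadj v hv).symm]
  refine card_le_domNum_of_pairwiseDisjoint (f := leaf)
    (Set.pairwiseDisjoint_iff.2 fun v hv w hw ⟨x, hxv, hxw⟩ => ?_)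
  rw [closedNeighborhood_leaf v hv] at hxv
  rw [closedNeighborhood_leaf w hw] at hxw
  rcases hxv with rfl | rfl <;> rcases hxw with hxw | hxw
  · exact (G.degree_eq_one_iff_existsUnique_adj.1 (hleaf v hv)).unique
      (hadj v hv).symm (hxw ▸ (hadj w hw).symm)
  · exact absurd (hxw ▸ hleaf v hv) (hnonleaf w hw)
  · exact absurd (hxw ▸ hleaf w hw) (hnonleaf x hv)
  · exact hxw

variable [Fintype α] [DecidableRel G.Adj]

/-- The vertices that are not leaves; an isolated vertex counts as internal. -/
def internalVertices (G : SimpleGraph α) [DecidableRel G.Adj] : Finset α :=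
  {v | G.degree v ≠ 1}

theorem mem_internalVertices : v ∈ internalVertices G ↔ G.degree v ≠ 1 :=
  mem_filter_univ v

theorem notMem_internalVertices : v ∉ internalVertices G ↔ G.degree v = 1 :=
  mem_internalVertices.not_left

theorem card_internalVertices (G : SimpleGraph α) [DecidableRel G.Adj] :
    #(internalVertices G) = Fintype.card α - #{v | G.degree v = 1} := by
  classical
  rw [internalVertices, ← card_compl, compl_filter]

theorem isDomSet_internalVertices
    (hleaf : ∀ ⦃u v⦄, G.Adj u v → G.degree u = 1 → G.degree v ≠ 1) :
    IsDomSet G (internalVertices G) := by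
  intro v hv
  have hv : G.degree v = 1 := notMem_internalVertices.1 hv
  obtain ⟨u, hvu⟩ := (G.degree_pos_iff_exists_adj v).1 (hv ▸ one_pos)
  exact ⟨u, mem_internalVertices.2 (hleaf hvu hv), hvu.symm⟩

theorem isDomSet_internalVertices_erase [DecidableEq α]
    (hleaf : ∀ ⦃u v⦄, G.Adj u v → G.degree u = 1 → G.degree v ≠ 1)
    (hdeg : 0 < G.degree v) (hv : ¬ IsSupportVertex G v) :
    IsDomSet G ((internalVertices G).erase v) := by
  intro x hx
  by_cases hxv : x = v
  · obtain ⟨u, hvu⟩ := (G.degree_pos_iff_exists_adj v).1 hdeg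
    have hu : u ∈ internalVertices G := mem_internalVertices.2 fun hu => hv ⟨u, hvu, hu⟩
    exact ⟨u, mem_erase.2 ⟨hvu.ne', hu⟩, hxv ▸ hvu.symm⟩
  · have hx : x ∉ internalVertices G := fun hmem => hx (mem_erase.2 ⟨hxv, hmem⟩)
    obtain ⟨u, hu, hux⟩ := isDomSet_internalVertices hleaf x hx
    have huv : u ≠ v := fun huv => hv ⟨x, huv ▸ hux, notMem_internalVertices.1 hx⟩
    exact ⟨u, mem_erase.2 ⟨huv, hu⟩, hux⟩

theorem domNum_eq_card_sub_leaves_iff_general (G : SimpleGraph α) [DecidableRel G.Adj]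
    (hdeg : ∀ v, 0 < G.degree v)
    (hleaf : ∀ ⦃u v⦄, G.Adj u v → G.degree u = 1 → G.degree v ≠ 1) :
    domNum G = Fintype.card α - #{v | G.degree v = 1} ↔
      ∀ v, G.degree v = 1 ∨ IsSupportVertex G v := by
  classical
  rw [← card_internalVertices]
  constructor
  · intro hmin v
    by_contra! hv
    have hdom : IsDomSet G ((internalVertices G).erase v) :=
      isDomSet_internalVertices_erase hleaf (hdeg v) hv.2
    have hlt : #((internalVertices G).erase v) < #(internalVertices G) :=
      card_erase_lt_of_mem (mem_internalVertices.2 hv.1)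
    exact (hdom.domNum_le.trans_lt hlt).ne hmin
  · intro hsupport
    refine le_antisymm (isDomSet_internalVertices hleaf).domNum_le ?_
    refine card_le_domNum_of_forall_isSupportVertex fun v hv => ?_
    have hnonleaf : G.degree v ≠ 1 := mem_internalVertices.1 hv
    exact ⟨hnonleaf, (hsupport v).resolve_left hnonleaf⟩

end Leaves

/-- For a tree `T` of order `n ≥ 3` with `l` leaves, `γ(T) = n - l` if and only if
every vertex of `T` is a leaf or a support vertex (a neighbor of a leaf). -/
theorem domNum_eq_card_sub_leaves_iff (T : SimpleGraph V) [DecidableRel T.Adj]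
    (hT : T.IsTree) (hn : 3 ≤ Fintype.card V) :
    domNum T = Fintype.card V - (univ.filter fun v => T.degree v = 1).card ↔
      ∀ v : V, T.degree v = 1 ∨ ∃ u : V, T.Adj v u ∧ T.degree u = 1 := by
  have : Nontrivial V := Fintype.one_lt_card_iff_nontrivial.1 (by omega)
  exact domNum_eq_card_sub_leaves_iff_general T
    (fun v => hT.connected.preconnected.degree_pos_of_nontrivial v) fun _ _ =>
      degree_ne_one_of_adj_of_degree_eq_one hT.connected.preconnected hn
end

section
/- If D is a minimum total dominating set in a nontrivial connected graph G, then there exists a spanning tree T of G such that D is a minimum total dominating set of T and the number of connected components of the subgraph of T induced by D equals the number of connected components of the subgraph of G induced by D. -/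
variable {V : Type*} [Fintype V] [DecidableEq V]

/-!
Grow a spanning forest in three stages, each a maximal acyclic extension of the previous one:
first within the edges having both ends in `D`, then within those having at least one end in `D`,
and finally within all edges of `G`. A maximal acyclic subgraph has the reachability relation of its
ambient graph, so the first stage already connects the components of `G[D]`. It also isolates no
vertex that has a neighbor: in the first stage every vertex of `D` keeps a neighbor in `D`, and in
the second every vertex outside `D` does, because the edges available to it lead to `D`.
Minimality of `D` passes to the tree, since deleting edges cannot lower the total domination number.
-/

section

open SimpleGraph

variable {W : Type*} {F G H K : SimpleGraph W}

theorem IsTotalDomSet.mono {S : Finset W} (hHG : H ≤ G) (hS : IsTotalDomSet H S) :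
    IsTotalDomSet G S := fun v ↦
  let ⟨u, hu, huv⟩ := hS v
  ⟨u, hu, hHG huv⟩

theorem IsTotalDomSet.totalDomNum_le_card {S : Finset W} (hS : IsTotalDomSet G S) :
    totalDomNum G ≤ S.card :=
  Nat.sInf_le ⟨S, hS, rfl⟩

theorem IsTotalDomSet.card_eq_totalDomNum_of_le {D : Finset W} (hD : IsTotalDomSet H D)
    (hHG : H ≤ G) (hmin : D.card = totalDomNum G) : D.card = totalDomNum H := by
  refine le_antisymm (le_csInf ⟨_, D, hD, rfl⟩ ?_) hD.totalDomNum_le_card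
  rintro _ ⟨S, hS, rfl⟩
  exact hmin.trans_le (hS.mono hHG).totalDomNum_le_card

theorem exists_mem_adj_of_reachable_eq {s : Set W} {u v : W} (hFK : F ≤ K)
    (hreach : F.Reachable = K.Reachable) (hs : K.neighborSet v ⊆ s) (huv : K.Adj u v) :
    ∃ w ∈ s, F.Adj w v := by
  have hF : F.Reachable v u := hreach ▸ huv.symm.reachable
  obtain ⟨w, hvw⟩ := hF.nonempty_neighborSet_left huv.ne'
  exact ⟨w, hs (hFK hvw), hvw.symm⟩

theorem reachable_induce_of_support_subset {s : Set W} (hs : H.support ⊆ s) {u v : s}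
    (huv : H.Reachable u v) : (H.induce s).Reachable u v := by
  by_cases hne : u = v
  · exact hne ▸ .rfl
  · obtain ⟨p⟩ := huv
    have hp : ¬p.Nil := Walk.not_nil_of_ne (Subtype.coe_ne_coe.mpr hne)
    exact ⟨p.induce s fun _ hx ↦ hs (mem_support_of_mem_walk_support p hp hx)⟩

theorem induce_reachable_eq_of_spanningCoe_reachable_eq {s : Set W}
    (hF : F ≤ (G.induce s).spanningCoe) (hreach : F.Reachable = (G.induce s).spanningCoe.Reachable)
    (hFH : F ≤ H) (hHG : H ≤ G) : (H.induce s).Reachable = (G.induce s).Reachable := by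
  ext u v
  refine ⟨.mono (comap_monotone _ hHG), fun huv ↦ ?_⟩
  have hFs : F.support ⊆ s := fun x ⟨y, hxy⟩ ↦ Subgraph.mem_of_adj_spanningCoe _ (hF hxy)
  have hFuv : F.Reachable u v := hreach ▸ huv.map (Embedding.map _ (G.induce s)).toHom
  exact (reachable_induce_of_support_subset hFs hFuv).mono (comap_monotone _ hFH)

theorem spanningCoe_induce_le_between_univ (G : SimpleGraph W) (s : Set W) :
    (G.induce s).spanningCoe ≤ G.between s .univ := by
  rintro _ _ ⟨_, u, v, huv, rfl, rfl⟩
  exact between_adj.mpr ⟨huv, .inl ⟨u.2, trivial⟩⟩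

theorem exists_spanning_tree_totalDomSet_general (G : SimpleGraph W) (D : Set W) :
    ∃ T ≤ G, T.IsAcyclic ∧ T.Reachable = G.Reachable ∧
      (∀ v, (∃ u ∈ D, G.Adj u v) → ∃ u ∈ D, T.Adj u v) ∧
      (T.induce D).Reachable = (G.induce D).Reachable := by
  obtain ⟨F₁, hF₁, hF₁acyc, hF₁reach⟩ :=
    (G.induce D).spanningCoe.exists_isAcyclic_reachable_eq_le
  obtain ⟨F₂, hF₁₂, hF₂, hF₂acyc, hF₂reach⟩ :=
    exists_isAcyclic_reachable_eq_le_of_le_of_isAcyclic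
      (hF₁.trans (spanningCoe_induce_le_between_univ G D)) hF₁acyc
  obtain ⟨T, hF₂T, hTG, hTacyc, hTreach⟩ :=
    exists_isAcyclic_reachable_eq_le_of_le_of_isAcyclic (hF₂.trans between_le) hF₂acyc
  refine ⟨T, hTG, hTacyc, hTreach, ?_,
    induce_reachable_eq_of_spanningCoe_reachable_eq hF₁ hF₁reach (hF₁₂.trans hF₂T) hTG⟩
  rintro v ⟨u, hu, huv⟩
  by_cases hv : v ∈ D
  · have huv₁ : (G.induce D).spanningCoe.Adj u v := ⟨huv.ne, ⟨u, hu⟩, ⟨v, hv⟩, huv, rfl, rfl⟩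
    obtain ⟨w, hw, hwv⟩ := exists_mem_adj_of_reachable_eq hF₁ hF₁reach
      (fun _ h ↦ Subgraph.mem_of_adj_spanningCoe _ h.symm) huv₁
    exact ⟨w, hw, hF₂T (hF₁₂ hwv)⟩
  · have huv₂ : (G.between D .univ).Adj u v := between_adj.mpr ⟨huv, .inl ⟨hu, trivial⟩⟩
    have hnbr : (G.between D .univ).neighborSet v ⊆ D := fun _ hvw ↦
      ((between_adj.mp hvw).2.resolve_left fun h ↦ hv h.1).2
    obtain ⟨w, hw, hwv⟩ := exists_mem_adj_of_reachable_eq hF₂ hF₂reach hnbr huv₂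
    exact ⟨w, hw, hF₂T hwv⟩

end

/-- If `D` is a minimum total dominating set of a nontrivial connected graph `G`, then
there is a spanning tree `T` of `G` in which `D` is a minimum total dominating set
and the induced subgraph `T[D]` has as many connected components as `G[D]`. -/
theorem exists_spanning_tree_totalDomSet (G : SimpleGraph V)
    (hc : G.Connected) (hn : 1 < Fintype.card V)
    (D : Finset V) (hD : IsTotalDomSet G D) (hmin : D.card = totalDomNum G) :
    ∃ T : SimpleGraph V, T ≤ G ∧ T.IsTree ∧
      IsTotalDomSet T D ∧ D.card = totalDomNum T ∧
      Nat.card (T.induce (↑D : Set V)).ConnectedComponent =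
        Nat.card (G.induce (↑D : Set V)).ConnectedComponent := by
  obtain ⟨T, hTG, hTacyc, hTreach, hTdom, hTinduce⟩ :=
    exists_spanning_tree_totalDomSet_general G D
  have hTconn : T.Connected :=
    { preconnected := fun u v ↦ hTreach ▸ hc.preconnected u v, nonempty := hc.nonempty }
  have hTD : IsTotalDomSet T D := fun v ↦ hTdom v (hD v)
  exact ⟨T, hTG, ⟨hTconn, hTacyc⟩, hTD, hTD.card_eq_totalDomNum_of_le hTG hmin,
    by simp only [SimpleGraph.ConnectedComponent, hTinduce]⟩
end

section
/- If G is a bipartite graph with no isolated vertices, then β_0(G) = Γ(G) = IR(G). -/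
/-!
The inequalities `β₀ ≤ Γ ≤ IR` hold in every graph, because a maximal independent set is a minimal
dominating set and a minimal dominating set is a maximal irredundant set.

Conversely, let `S` be irredundant and choose a private neighbor `f v` of every `v ∈ S`. Privacy
makes the pairs `{v, f v}` (single vertices when `f v = v`) pairwise disjoint, and maximal
cliques of the subgraph induced on `S ∪ f '' S`. If some independent set of this subgraph meets
all of its maximal cliques, then choosing one of its vertices in each pair gives an independent
set of `|S|` vertices. A 2-colored graph always has such an independent set: all vertices of the
first color, together with all isolated vertices.
-/

variable {V : Type*} [Fintype V] [DecidableEq V]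

/-- `v` has a private neighbor with respect to `S`: some vertex of the closed
neighborhood of `v` lies outside the closed neighborhood of `S \ {v}`. -/
def HasPrivateNbr (G : SimpleGraph V) (S : Finset V) (v : V) : Prop :=
  ∃ w : V, (w = v ∨ G.Adj v w) ∧ ∀ u ∈ S, u ≠ v → ¬ (w = u ∨ G.Adj u w)

/-- `S` is irredundant: every vertex of `S` has a private neighbor. -/
def IsIrredundant (G : SimpleGraph V) (S : Finset V) : Prop :=
  ∀ v ∈ S, HasPrivateNbr G S v

/-- `S` is a maximal irredundant set of `G`. -/
def IsMaximalIrredundant (G : SimpleGraph V) (S : Finset V) : Prop :=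
  IsIrredundant G S ∧ ∀ T : Finset V, S ⊂ T → ¬ IsIrredundant G T

/-- The irredundance number: minimum cardinality of a maximal irredundant set. -/
noncomputable def irNum (G : SimpleGraph V) : ℕ :=
  sInf {n | ∃ S : Finset V, IsMaximalIrredundant G S ∧ S.card = n}

/-- The upper irredundance number: maximum cardinality of a maximal irredundant set. -/
noncomputable def upperIrNum (G : SimpleGraph V) : ℕ :=
  sSup {n | ∃ S : Finset V, IsMaximalIrredundant G S ∧ S.card = n}

/-- `S` is an independent set of `G`. -/
def IsIndepSet (G : SimpleGraph V) (S : Finset V) : Prop :=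
  ∀ u ∈ S, ∀ v ∈ S, ¬ G.Adj u v

/-- `S` is a maximal independent set of `G`. -/
def IsMaximalIndepSet (G : SimpleGraph V) (S : Finset V) : Prop :=
  IsIndepSet G S ∧ ∀ T : Finset V, S ⊂ T → ¬ IsIndepSet G T

/-- The independent domination number: minimum cardinality of a maximal independent set. -/
noncomputable def indepDomNum (G : SimpleGraph V) : ℕ :=
  sInf {n | ∃ S : Finset V, IsMaximalIndepSet G S ∧ S.card = n}

/-- The independence number: maximum cardinality of an independent set. -/
noncomputable def indepNum (G : SimpleGraph V) : ℕ :=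
  sSup {n | ∃ S : Finset V, IsIndepSet G S ∧ S.card = n}

/-- `S` is a minimal dominating set of `G`. -/
def IsMinimalDomSet (G : SimpleGraph V) (S : Finset V) : Prop :=
  IsDomSet G S ∧ ∀ T : Finset V, T ⊂ S → ¬ IsDomSet G T

/-- The upper domination number: maximum cardinality of a minimal dominating set. -/
noncomputable def upperDomNum (G : SimpleGraph V) : ℕ :=
  sSup {n | ∃ S : Finset V, IsMinimalDomSet G S ∧ S.card = n}

section StronglyPerfect

variable {α : Type*} {G : SimpleGraph α}

/-- `G` is a strongly perfect graph: every induced subgraph has an independent set that meets all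
its maximal cliques. The induced subgraph is represented by its vertex set `W`; cliques are required
to be nonempty because for `W = ∅` the empty set is a maximal clique. -/
def IsStronglyPerfect (G : SimpleGraph α) : Prop :=
  ∀ W : Set α, ∃ A ⊆ W, G.IsIndepSet A ∧
    ∀ K : Set α, K.Nonempty → Maximal (fun L ↦ L ⊆ W ∧ G.IsClique L) K → (A ∩ K).Nonempty

theorem IsStronglyPerfect.of_colorable_two (hG : G.Colorable 2) : IsStronglyPerfect G := by
  obtain ⟨c⟩ := hG
  intro W
  refine ⟨{v ∈ W | c v = 0 ∨ ∀ u ∈ W, ¬ G.Adj u v}, Set.sep_subset _ _, ?_, ?_⟩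
  · rintro u ⟨huW, hu⟩ v ⟨hvW, hv⟩ - huv
    have hcu : c u = 0 := hu.resolve_right fun hiso ↦ hiso v hvW huv.symm
    have hcv : c v = 0 := hv.resolve_right fun hiso ↦ hiso u huW huv
    exact c.valid huv (hcu.trans hcv.symm)
  · rintro K ⟨v, hvK⟩ hK
    have hvW : v ∈ W := hK.prop.1 hvK
    by_cases hv : c v = 0 ∨ ∀ u ∈ W, ¬ G.Adj u v
    · exact ⟨v, ⟨hvW, hv⟩, hvK⟩
    · push Not at hv
      obtain ⟨hcv, u, huW, huv⟩ := hv
      have hpair : {u, v} ⊆ W ∧ G.IsClique {u, v} :=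
        ⟨Set.pair_subset huW hvW, SimpleGraph.isClique_pair.2 fun _ ↦ huv⟩
      obtain ⟨w, hwK, hwv⟩ : ∃ w ∈ K, w ≠ v := by
        by_contra! hsub
        have hKpair : K ⊆ {u, v} := fun w hw ↦ .inr (hsub w hw)
        have huK : u ∈ K := hK.le_of_ge hpair hKpair (Set.mem_insert u {v})
        exact huv.ne (hsub u huK)
      have hcw : c w ≠ c v := c.valid (hK.prop.2 hwK hvK hwv)
      exact ⟨w, ⟨hK.prop.1 hwK, .inl (by omega)⟩, hwK⟩

/-- `w` is a private neighbor of `v` with respect to `S`, as in `HasPrivateNbr`: it lies in the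
closed neighborhood of `v` but in that of no other vertex of `S`. -/
def IsPrivateNbr (G : SimpleGraph α) (S : Set α) (v w : α) : Prop :=
  (w = v ∨ G.Adj v w) ∧ ∀ u ∈ S, u ≠ v → ¬ (w = u ∨ G.Adj u w)

variable {S : Set α} {u v w x : α} {f : α → α}

theorem IsPrivateNbr.eq_of_closedNbr (hw : IsPrivateNbr G S v w) (hu : u ∈ S)
    (huw : w = u ∨ G.Adj u w) : u = v :=
  by_contra fun huv ↦ hw.2 u hu huv huw

theorem IsPrivateNbr.disjoint_pair (hu : u ∈ S) (hv : v ∈ S) (huv : u ≠ v)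
    (hx : IsPrivateNbr G S u x) (hw : IsPrivateNbr G S v w) :
    Disjoint ({u, x} : Set α) {v, w} := by
  rw [Set.disjoint_left]
  rintro y (rfl | rfl) (rfl | rfl)
  · exact huv rfl
  · exact huv (hw.eq_of_closedNbr hu (.inl rfl))
  · exact huv (hx.eq_of_closedNbr hv (.inl rfl)).symm
  · exact huv (hw.eq_of_closedNbr hu hx.1)

theorem IsPrivateNbr.maximal_isClique_pair (hf : ∀ u ∈ S, IsPrivateNbr G S u (f u)) (hv : v ∈ S) :
    Maximal (fun K ↦ K ⊆ S ∪ f '' S ∧ G.IsClique K) {v, f v} := by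
  refine ⟨⟨Set.pair_subset (.inl hv) (.inr ⟨v, hv, rfl⟩), SimpleGraph.isClique_pair.2
    fun hne ↦ (hf v hv).1.resolve_left hne.symm⟩, ?_⟩
  rintro K ⟨hKW, hK⟩ hvK x hxK
  obtain ⟨hvK, hfvK⟩ := Set.pair_subset_iff.1 hvK
  rcases hKW hxK with hx | ⟨u, hu, rfl⟩
  · have hxv : f v = x ∨ G.Adj x (f v) := or_iff_not_imp_left.2 fun hne ↦ hK hxK hfvK (Ne.symm hne)
    exact .inl ((hf v hv).eq_of_closedNbr hx hxv)
  · have hvu : f u = v ∨ G.Adj v (f u) := or_iff_not_imp_left.2 fun hne ↦ hK hvK hxK (Ne.symm hne)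
    exact .inr (congrArg f ((hf u hu).eq_of_closedNbr hv hvu)).symm

end StronglyPerfect

section DominationChain

variable {α : Type*} {G : SimpleGraph α} {S : Finset α}

theorem IsIrredundant.exists_isIndepSet_card_eq (hS : IsIrredundant G S)
    (hG : IsStronglyPerfect G) : ∃ T : Finset α, IsIndepSet G T ∧ T.card = S.card := by
  classical
  choose! f hf using hS
  have hf : ∀ v ∈ (S : Set α), IsPrivateNbr G S v (f v) := hf
  obtain ⟨A, -, hA, hAK⟩ := hG (S ∪ f '' S)
  have hmeet : ∀ v ∈ S, ∃ x, x ∈ A ∧ x ∈ ({v, f v} : Set α) := fun v hv ↦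
    hAK _ (Set.insert_nonempty _ _) (IsPrivateNbr.maximal_isClique_pair hf hv)
  choose! g hgA hgpair using hmeet
  refine ⟨S.image g, ?_, Finset.card_image_of_injOn fun u hu v hv huv ↦ ?_⟩
  · simp only [IsIndepSet, Finset.forall_mem_image]
    exact fun u hu v hv huv ↦ hA (hgA u hu) (hgA v hv) huv.ne huv
  · by_contra hne
    have hdisj := IsPrivateNbr.disjoint_pair hu hv hne (hf u hu) (hf v hv)
    exact Set.disjoint_left.1 hdisj (hgpair u hu) (huv ▸ hgpair v hv)

theorem isDomSet_iff_forall_exists_closedNbr :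
    IsDomSet G S ↔ ∀ w, ∃ u ∈ S, w = u ∨ G.Adj u w := by
  refine forall_congr' fun w ↦ ⟨fun hw ↦ ?_, fun ⟨u, hu, huw⟩ hw ↦ ?_⟩
  · by_cases hwS : w ∈ S
    · exact ⟨w, hwS, .inl rfl⟩
    · obtain ⟨u, hu, huw⟩ := hw hwS
      exact ⟨u, hu, .inr huw⟩
  · exact ⟨u, hu, huw.resolve_left fun h ↦ hw (h ▸ hu)⟩

theorem IsMaximalIndepSet.isDomSet (hS : IsMaximalIndepSet G S) : IsDomSet G S := by
  classical
  intro v hv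
  by_contra! hnadj
  refine hS.2 (insert v S) (Finset.ssubset_insert hv) ?_
  simp only [IsIndepSet, Finset.forall_mem_insert]
  exact ⟨⟨G.irrefl, fun u hu huv ↦ hnadj u hu huv.symm⟩,
    fun u hu ↦ ⟨hnadj u hu, hS.1 u hu⟩⟩

theorem IsMaximalIndepSet.isMinimalDomSet (hS : IsMaximalIndepSet G S) : IsMinimalDomSet G S := by
  refine ⟨hS.isDomSet, fun T hTS hT ↦ ?_⟩
  obtain ⟨v, hvS, hvT⟩ := Finset.exists_of_ssubset hTS
  obtain ⟨u, huT, huv⟩ := hT v hvT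
  exact hS.1 u (hTS.subset huT) v hvS huv

theorem IsMinimalDomSet.isIrredundant (hS : IsMinimalDomSet G S) : IsIrredundant G S := by
  classical
  intro v hv
  have herase : ¬ IsDomSet G (S.erase v) := hS.2 _ (Finset.erase_ssubset hv)
  rw [isDomSet_iff_forall_exists_closedNbr] at herase
  push Not at herase
  obtain ⟨w, hw⟩ := herase
  have hprivate : ∀ u ∈ S, u ≠ v → ¬ (w = u ∨ G.Adj u w) := fun u hu huv ↦
    not_or.2 (hw u (Finset.mem_erase.2 ⟨huv, hu⟩))
  obtain ⟨u, hu, huw⟩ := isDomSet_iff_forall_exists_closedNbr.1 hS.1 w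
  obtain rfl : u = v := by_contra fun huv ↦ hprivate u hu huv huw
  exact ⟨w, huw, hprivate⟩

theorem IsMinimalDomSet.isMaximalIrredundant (hS : IsMinimalDomSet G S) :
    IsMaximalIrredundant G S := by
  refine ⟨hS.isIrredundant, fun T hST hT ↦ ?_⟩
  obtain ⟨v, hvT, hvS⟩ := Finset.exists_of_ssubset hST
  obtain ⟨w, -, hw⟩ := hT v hvT
  obtain ⟨u, hu, huw⟩ := isDomSet_iff_forall_exists_closedNbr.1 hS.1 w
  exact hw u (hST.subset hu) (fun huv ↦ hvS (huv ▸ hu)) huw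

theorem IsIndepSet.exists_isMaximalIndepSet_superset [Finite α] (hS : IsIndepSet G S) :
    ∃ T, S ⊆ T ∧ IsMaximalIndepSet G T := by
  obtain ⟨T, hST, hT⟩ := Finite.exists_le_maximal hS
  exact ⟨T, hST, hT.prop, fun _ hTU ↦ hT.not_prop_of_gt hTU⟩

theorem sSup_card_le_sSup_card [Finite α] {P Q : Finset α → Prop}
    (h : ∀ S, P S → ∃ T, Q T ∧ S.card ≤ T.card) :
    sSup {n | ∃ S, P S ∧ S.card = n} ≤ sSup {n | ∃ S, Q S ∧ S.card = n} := by
  refine csSup_le' ?_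
  rintro _ ⟨S, hS, rfl⟩
  obtain ⟨T, hT, hST⟩ := h S hS
  have hfinite : {n | ∃ S, Q S ∧ S.card = n}.Finite := (Set.toFinite {S | Q S}).image Finset.card
  exact hST.trans (le_csSup hfinite.bddAbove ⟨T, hT, rfl⟩)

theorem indepNum_le_upperDomNum [Finite α] (G : SimpleGraph α) : indepNum G ≤ upperDomNum G :=
  sSup_card_le_sSup_card fun _ hS ↦
    let ⟨T, hST, hT⟩ := hS.exists_isMaximalIndepSet_superset
    ⟨T, hT.isMinimalDomSet, Finset.card_le_card hST⟩

theorem upperDomNum_le_upperIrNum [Finite α] (G : SimpleGraph α) :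
    upperDomNum G ≤ upperIrNum G :=
  sSup_card_le_sSup_card fun S hS ↦ ⟨S, hS.isMaximalIrredundant, le_rfl⟩

theorem IsStronglyPerfect.upperIrNum_le_indepNum [Finite α] (hG : IsStronglyPerfect G) :
    upperIrNum G ≤ indepNum G :=
  sSup_card_le_sSup_card fun _ hS ↦
    let ⟨T, hT, hcard⟩ := hS.1.exists_isIndepSet_card_eq hG
    ⟨T, hT, hcard.ge⟩

end DominationChain

theorem bipartite_upper_chain_eq_general {α : Type*} [Finite α] (G : SimpleGraph α)
    (hG : IsStronglyPerfect G) :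
    indepNum G = upperDomNum G ∧ upperDomNum G = upperIrNum G := by
  have hβΓ : indepNum G ≤ upperDomNum G := indepNum_le_upperDomNum G
  have hΓIR : upperDomNum G ≤ upperIrNum G := upperDomNum_le_upperIrNum G
  have hIRβ : upperIrNum G ≤ indepNum G := hG.upperIrNum_le_indepNum
  exact ⟨hβΓ.antisymm (hΓIR.trans hIRβ), hΓIR.antisymm (hIRβ.trans hβΓ)⟩

/-- For a bipartite graph `G` with no isolated vertices,
`β₀(G) = Γ(G) = IR(G)`. -/
theorem bipartite_upper_chain_eq (G : SimpleGraph V) (hb : G.Colorable 2)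
    (h : ∀ v : V, ∃ u : V, G.Adj v u) :
    indepNum G = upperDomNum G ∧ upperDomNum G = upperIrNum G :=
  bipartite_upper_chain_eq_general G (.of_colorable_two hb)
end
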